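/- Let Q_1 and Q_2 be QGPs and let S be a POM match relation witnessing Q_1 ▷ Q_2. Then for every data graph G with Q_1 ≺_c G and every pair (u_1,u_2) ∈ S, the match result satisfies M^G_{Q_1}(u_1) ⊆ M^G_{Q_2}(u_2). -/

import Mathlib

/-! Formalization of graph patterns from "Revisited Containment for Graph Patterns".
Labels are modeled as natural numbers, attribute names as naturals, attribute
values as integers. -/

/-- Comparison operators allowed in atomic attribute constraints. -/
inductive AOp : Type
  | ge | le | eq | ne
deriving DecidableEq

/-- `AOp.holds op c' c` : the value `c'` satisfies the constraint `_ op c`. -/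
def AOp.holds : AOp → ℤ → ℤ → Prop
  | .ge, c', c => c' ≥ c
  | .le, c', c => c' ≤ c
  | .eq, c', c => c' = c
  | .ne, c', c => c' ≠ c

/-- A finite conjunction of atomic constraints `A op c`. -/
abbrev AttrConstraints := Finset (ℕ × AOp × ℤ)

/-- `A(v) ∼ A_P(u)` : the attribute values of a data node (a partial map from
attribute names to values) match the attribute constraints of a pattern node. -/
def attrMatch (a : ℕ → Option ℤ) (P : AttrConstraints) : Prop :=
  ∀ c ∈ P, ∃ c', a c.1 = some c' ∧ c.2.1.holds c' c.2.2

/-- `A_1(u_1) ∼ A_2(u_2)` : the constraints over each attribute in `P2` are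
entailed by those over the same attribute in `P1`. -/
def constrEntails (P1 P2 : AttrConstraints) : Prop :=
  ∀ c2 ∈ P2, ∀ x : ℤ,
    (∀ c1 ∈ P1, c1.1 = c2.1 → c1.2.1.holds x c1.2.2) → c2.2.1.holds x c2.2.2

/-- A data graph: finite node set, directed edges, labels on nodes and edges,
and a partial attribute-value map on nodes. -/
structure DataGraph (V : Type) where
  nodes : Finset V
  edges : Finset (V × V)
  nlabel : V → ℕ
  elabel : V × V → ℕ
  attr : V → ℕ → Option ℤ

/-- Well-formedness of a data graph: edges connect nodes. -/
def DataGraph.WellFormed {V : Type} (G : DataGraph V) : Prop :=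
  ∀ e ∈ G.edges, e.1 ∈ G.nodes ∧ e.2 ∈ G.nodes

/-- `Gs` is a subgraph of `G`. -/
def IsSubgraph {V : Type} (Gs G : DataGraph V) : Prop :=
  Gs.WellFormed ∧ Gs.nodes ⊆ G.nodes ∧ Gs.edges ⊆ G.edges ∧
  (∀ v ∈ Gs.nodes, Gs.nlabel v = G.nlabel v ∧ Gs.attr v = G.attr v) ∧
  (∀ e ∈ Gs.edges, Gs.elabel e = G.elabel e)

/-- A quantified graph pattern (QGP): nodes, edges, labels, attribute
constraints on nodes and counting quantifiers on edges. -/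
structure QGP (V : Type) where
  nodes : Finset V
  edges : Finset (V × V)
  nlabel : V → ℕ
  elabel : V × V → ℕ
  attrC : V → AttrConstraints
  cq : V × V → ℕ

/-- Undirected adjacency in a pattern. -/
def QGP.Adj {V : Type} (Q : QGP V) (u w : V) : Prop :=
  (u, w) ∈ Q.edges ∨ (w, u) ∈ Q.edges

/-- Well-formedness of a QGP: edges connect nodes, counting quantifiers are
at least 1, and the pattern is connected. -/
def QGP.WellFormed {V : Type} (Q : QGP V) : Prop :=
  (∀ e ∈ Q.edges, e.1 ∈ Q.nodes ∧ e.2 ∈ Q.nodes) ∧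
  (∀ e ∈ Q.edges, 1 ≤ Q.cq e) ∧
  (∀ u ∈ Q.nodes, ∀ w ∈ Q.nodes, Relation.ReflTransGen Q.Adj u w)

/-- A POM (pattern-only matching) match relation of `Q1` in `Q2`:
conditions (1)–(3) of Definition of pattern-only matching. -/
def IsPOMRel {V1 V2 : Type} (Q1 : QGP V1) (Q2 : QGP V2) (S : Set (V1 × V2)) : Prop :=
  (∀ p ∈ S, p.1 ∈ Q1.nodes ∧ p.2 ∈ Q2.nodes) ∧
  (∀ p ∈ S, Q1.nlabel p.1 = Q2.nlabel p.2 ∧ constrEntails (Q1.attrC p.1) (Q2.attrC p.2)) ∧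
  (∀ p ∈ S, ∀ w2, (w2, p.2) ∈ Q2.edges →
      ∃ w1, (w1, p.1) ∈ Q1.edges ∧ (w1, w2) ∈ S ∧
        Q1.elabel (w1, p.1) = Q2.elabel (w2, p.2)) ∧
  (∀ p ∈ S, ∀ w2, (p.2, w2) ∈ Q2.edges →
      ∃ w1, (p.1, w1) ∈ Q1.edges ∧ (w1, w2) ∈ S ∧
        Q1.elabel (p.1, w1) = Q2.elabel (p.2, w2) ∧
        Q2.cq (p.2, w2) ≤ Q1.cq (p.1, w1))

/-- `Q1 ▷ Q2` : `Q1` matches `Q2` (pattern-only matching). -/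
def POM {V1 V2 : Type} (Q1 : QGP V1) (Q2 : QGP V2) : Prop :=
  ∃ S : Set (V1 × V2), IsPOMRel Q1 Q2 S ∧ ∀ u2 ∈ Q2.nodes, ∃ u1, (u1, u2) ∈ S

/-- A conditional-simulation relation of a QGP `Q` in a data graph `G`
(conditions (1)–(3) of conditional simulation). -/
def IsSimRel {VP VD : Type} (Q : QGP VP) (G : DataGraph VD) (S : Set (VP × VD)) : Prop :=
  (∀ p ∈ S, p.1 ∈ Q.nodes ∧ p.2 ∈ G.nodes) ∧
  (∀ p ∈ S, Q.nlabel p.1 = G.nlabel p.2 ∧ attrMatch (G.attr p.2) (Q.attrC p.1)) ∧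
  (∀ p ∈ S, ∀ u', (p.1, u') ∈ Q.edges →
      ∃ T : Finset VD, Q.cq (p.1, u') ≤ T.card ∧
        ∀ v' ∈ T, (p.2, v') ∈ G.edges ∧
          G.elabel (p.2, v') = Q.elabel (p.1, u') ∧ (u', v') ∈ S) ∧
  (∀ p ∈ S, ∀ u', (u', p.1) ∈ Q.edges →
      ∃ v', (v', p.2) ∈ G.edges ∧
        G.elabel (v', p.2) = Q.elabel (u', p.1) ∧ (u', v') ∈ S)

/-- `Q ≺_c G` via the relation `S` (conditions (1)–(4)). -/
def QGP.MatchesVia {VP VD : Type} (Q : QGP VP) (G : DataGraph VD)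
    (S : Set (VP × VD)) : Prop :=
  IsSimRel Q G S ∧ ∀ u ∈ Q.nodes, ∃ v, (u, v) ∈ S

/-- `Q ≺_c G` : the data graph `G` matches the QGP `Q` via conditional simulation. -/
def QGP.Matches {VP VD : Type} (Q : QGP VP) (G : DataGraph VD) : Prop :=
  ∃ S : Set (VP × VD), Q.MatchesVia G S

/-- The maximum conditional-simulation relation `S^G_Q` of a QGP in a data graph. -/
def QGP.maxRel {VP VD : Type} (Q : QGP VP) (G : DataGraph VD) : Set (VP × VD) :=
  ⋃₀ {S | IsSimRel Q G S}

/-- The match result `M^G_Q` on pattern nodes (∅ when `Q ⊀_c G`). -/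
def QGP.MN {VP VD : Type} (Q : QGP VP) (G : DataGraph VD) (u : VP) : Set VD :=
  {v | Q.Matches G ∧ (u, v) ∈ Q.maxRel G}

/-- The match result `M^G_Q` on pattern edges (∅ when `Q ⊀_c G`). -/
def QGP.ME {VP VD : Type} (Q : QGP VP) (G : DataGraph VD) (e : VP × VP) : Set (VD × VD) :=
  {d | Q.Matches G ∧ d ∈ G.edges ∧ (e.1, d.1) ∈ Q.maxRel G ∧
      (e.2, d.2) ∈ Q.maxRel G ∧ G.elabel d = Q.elabel e}

/-- A data node `v` satisfies a predicate (a QGP with query focus `u`) in `G`: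
there is a subgraph of `G` matching the predicate via a relation containing `(u,v)`. -/
def SatPred {VP VD : Type} (Q : QGP VP) (G : DataGraph VD) (u : VP) (v : VD) : Prop :=
  ∃ (Gs : DataGraph VD) (S : Set (VP × VD)),
    IsSubgraph Gs G ∧ Q.MatchesVia Gs S ∧ (u, v) ∈ S

/-- The shape (nodes, edges, query focus) of a predicate of a CGP. -/
structure PredShape (V : Type) where
  nodes : Finset V
  edges : Finset (V × V)
  focus : V

/-- A conditional graph pattern (CGP): global labelling/attribute/quantifier
data, a core, and finite sets of positive and negative predicates, each with
its query focus. -/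
structure CGP (V : Type) where
  nlabel : V → ℕ
  elabel : V × V → ℕ
  attrC : V → AttrConstraints
  cq : V × V → ℕ
  coreNodes : Finset V
  coreEdges : Finset (V × V)
  pos : Finset (PredShape V)
  neg : Finset (PredShape V)

/-- The core of a CGP, as a QGP. -/
def CGP.coreQGP {V : Type} (C : CGP V) : QGP V :=
  ⟨C.coreNodes, C.coreEdges, C.nlabel, C.elabel, C.attrC, C.cq⟩

/-- A predicate of a CGP, as a QGP. -/
def CGP.predQGP {V : Type} (C : CGP V) (q : PredShape V) : QGP V :=
  ⟨q.nodes, q.edges, C.nlabel, C.elabel, C.attrC, C.cq⟩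

/-- The set `E⁺` of edges of positive predicates. -/
def CGP.posEdges {V : Type} [DecidableEq V] (C : CGP V) : Finset (V × V) :=
  C.pos.biUnion (·.edges)

/-- The set `E⁻` of edges of negative predicates. -/
def CGP.negEdges {V : Type} [DecidableEq V] (C : CGP V) : Finset (V × V) :=
  C.neg.biUnion (·.edges)

/-- The positive version `C⁺` of a CGP: the QGP with nodes `V ∪ V⁺`
and edges `E ∪ E⁺`. -/
def CGP.posVersion {V : Type} [DecidableEq V] (C : CGP V) : QGP V :=
  ⟨C.coreNodes ∪ C.pos.biUnion (·.nodes), C.coreEdges ∪ C.posEdges,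
   C.nlabel, C.elabel, C.attrC, C.cq⟩

/-- Well-formedness of a CGP: the core and each predicate are well-formed QGPs,
each predicate's query focus is a core node, and each predicate shares with the
core exactly its focus node. -/
def CGP.WellFormed {V : Type} [DecidableEq V] (C : CGP V) : Prop :=
  C.coreQGP.WellFormed ∧
  (∀ q ∈ C.pos, (C.predQGP q).WellFormed ∧ q.focus ∈ C.coreNodes ∧
    q.focus ∈ q.nodes ∧ q.nodes ∩ C.coreNodes = {q.focus}) ∧
  (∀ q ∈ C.neg, (C.predQGP q).WellFormed ∧ q.focus ∈ C.coreNodes ∧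
    q.focus ∈ q.nodes ∧ q.nodes ∩ C.coreNodes = {q.focus})

/-- A conditional-simulation relation of a CGP `C` in a data graph `G`:
conditions (1)–(3) on the core plus conditions (4)–(5) on predicates. -/
def IsCondSimRel {V D : Type} (C : CGP V) (G : DataGraph D) (S : Set (V × D)) : Prop :=
  IsSimRel C.coreQGP G S ∧
  (∀ p ∈ S, ∀ q ∈ C.pos, q.focus = p.1 → SatPred (C.predQGP q) G p.1 p.2) ∧
  (∀ p ∈ S, ∀ q ∈ C.neg, q.focus = p.1 → ¬ SatPred (C.predQGP q) G p.1 p.2)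

/-- `C ≺_c G` : the data graph `G` matches the CGP `C` via conditional simulation. -/
def CGP.Matches {V D : Type} (C : CGP V) (G : DataGraph D) : Prop :=
  ∃ S : Set (V × D), IsCondSimRel C G S ∧ ∀ u ∈ C.coreNodes, ∃ v, (u, v) ∈ S

/-- The maximum conditional-simulation relation `S^G_C` of a CGP in a data graph. -/
def CGP.maxRel {V D : Type} (C : CGP V) (G : DataGraph D) : Set (V × D) :=
  ⋃₀ {S | IsCondSimRel C G S}

/-- The match result `M^G_C` on core nodes (∅ when `C ⊀_c G`). -/
def CGP.MN {V D : Type} (C : CGP V) (G : DataGraph D) (u : V) : Set D :=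
  {v | C.Matches G ∧ (u, v) ∈ C.maxRel G}

/-- The match result `M^G_C` on core edges (∅ when `C ⊀_c G`). -/
def CGP.ME {V D : Type} (C : CGP V) (G : DataGraph D) (e : V × V) : Set (D × D) :=
  {d | C.Matches G ∧ d ∈ G.edges ∧ (e.1, d.1) ∈ C.maxRel G ∧
      (e.2, d.2) ∈ C.maxRel G ∧ G.elabel d = C.elabel e}

/-- Traditional containment `C1 ⊑ C2` via the mapping `λ` (given by `lamN` on
core nodes, `lamE` on core edges): over every data graph, every match of a core
node (edge) of `C1` is a match of some node (edge) in its image under `λ`. -/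
def TradContainedVia {V1 V2 : Type} (C1 : CGP V1) (C2 : CGP V2)
    (lamN : V1 → Set V2) (lamE : V1 × V1 → Set (V2 × V2)) : Prop :=
  (∀ u ∈ C1.coreNodes, lamN u ⊆ ↑C2.coreNodes) ∧
  (∀ e ∈ C1.coreEdges, lamE e ⊆ ↑C2.coreEdges) ∧
  ∀ (D : Type) (G : DataGraph D), G.WellFormed →
    (∀ u ∈ C1.coreNodes, C1.MN G u ⊆ ⋃ u' ∈ lamN u, C2.MN G u') ∧
    (∀ e ∈ C1.coreEdges, C1.ME G e ⊆ ⋃ e' ∈ lamE e, C2.ME G e')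

/-- Conditions (★) on a relation `S` between `C1⁺` and `C2⁺`. -/
def StarCond {V1 V2 : Type} [DecidableEq V1] [DecidableEq V2]
    (C1 : CGP V1) (C2 : CGP V2) (S : Set (V1 × V2)) : Prop :=
  -- (1) S is a POM match relation witnessing C1⁺ ▷ C2⁺
  IsPOMRel C1.posVersion C2.posVersion S ∧
  (∀ u2 ∈ C2.posVersion.nodes, ∃ u1, (u1, u2) ∈ S) ∧
  -- (2) negative predicates of C2 are matched by negative predicates of C1
  (∀ p ∈ S, ∀ q2 ∈ C2.neg, q2.focus = p.2 →
      ∃ q1 ∈ C1.neg, q1.focus = p.1 ∧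
        ∃ S' : Set (V2 × V1), IsPOMRel (C2.predQGP q2) (C1.predQGP q1) S' ∧
          (∀ w1 ∈ q1.nodes, ∃ w2, (w2, w1) ∈ S') ∧ (p.2, p.1) ∈ S') ∧
  -- (3) core nodes and core edges of C1 are matched to core nodes/edges of C2
  (∀ u1 ∈ C1.coreNodes, ∃ u2 ∈ C2.coreNodes, (u1, u2) ∈ S) ∧
  (∀ e1 ∈ C1.coreEdges, ∃ e2 ∈ C2.coreEdges, (e1.1, e2.1) ∈ S ∧ (e1.2, e2.2) ∈ S)

/-- The mapping `λ` on core nodes induced by a match relation `S`. -/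
def inducedLamN {V1 V2 : Type} (C2 : CGP V2) (S : Set (V1 × V2)) (u : V1) : Set V2 :=
  {u2 | u2 ∈ C2.coreNodes ∧ (u, u2) ∈ S}

/-- The mapping `λ` on core edges induced by a match relation `S`. -/
def inducedLamE {V1 V2 : Type} (C2 : CGP V2) (S : Set (V1 × V2))
    (e : V1 × V1) : Set (V2 × V2) :=
  {e2 | e2 ∈ C2.coreEdges ∧ (e.1, e2.1) ∈ S ∧ (e.2, e2.2) ∈ S}

/-- The data nodes occurring in the match result of `C` over `G`. -/
def NodesInResult {V D : Type} (C : CGP V) (G : DataGraph D) : Set D :=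
  ⋃ u ∈ C.coreNodes, C.MN G u

/-- Two data graphs have the same match result for `C`. -/
def MatchResultsAgree {V D : Type} (C : CGP V) (G G' : DataGraph D) : Prop :=
  (∀ u ∈ C.coreNodes, C.MN G u = C.MN G' u) ∧
  (∀ e ∈ C.coreEdges, C.ME G e = C.ME G' e)

/-- `G` and `G'` are data graphs over the same node set that agree on the labels
and attribute values of all nodes occurring in their match results of `C2`, and
have the same match result of `C2`. -/
def GraphsAgreeFor {V2 D : Type} (C2 : CGP V2) (G G' : DataGraph D) : Prop :=
  G.nodes = G'.nodes ∧
  (∀ v ∈ NodesInResult C2 G ∪ NodesInResult C2 G',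
      G.nlabel v = G'.nlabel v ∧ G.attr v = G'.attr v) ∧
  MatchResultsAgree C2 G G'

/-- A predicate `q` of `C1` (with query focus `q.focus`) is evaluable over a set
`lam` of core nodes of `C2`: for every data graph and every node in the
intersection of the match sets of `lam`, satisfaction of the predicate is
determined by the match result of `C2` (together with labels and attribute
values of the nodes occurring in it). -/
def Evaluable {V1 V2 : Type} (C1 : CGP V1) (C2 : CGP V2)
    (lam : Set V2) (q : PredShape V1) : Prop :=
  ∀ (D : Type) (G G' : DataGraph D), G.WellFormed → G'.WellFormed →
    GraphsAgreeFor C2 G G' →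
    ∀ v, v ∈ ⋂ u' ∈ lam, C2.MN G u' →
      (SatPred (C1.predQGP q) G q.focus v ↔ SatPred (C1.predQGP q) G' q.focus v)

/-- `r` is (a part of) a positive predicate of `C`, with the same query focus. -/
def IsPartOfPos {V : Type} (C : CGP V) (r : PredShape V) : Prop :=
  ∃ q ∈ C.pos, r.nodes ⊆ q.nodes ∧ r.edges ⊆ q.edges ∧ r.focus = q.focus

/-- A containment match relation between two QGPs: a POM match relation
witnessing `Q1 ▷ Q2` in which moreover every node and edge of `Q1` is matched
to some node/edge of `Q2`. -/
def QGPContainRel {V1 V2 : Type} (Q1 : QGP V1) (Q2 : QGP V2)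
    (S : Set (V1 × V2)) : Prop :=
  IsPOMRel Q1 Q2 S ∧ (∀ u2 ∈ Q2.nodes, ∃ u1, (u1, u2) ∈ S) ∧
  (∀ u1 ∈ Q1.nodes, ∃ u2 ∈ Q2.nodes, (u1, u2) ∈ S) ∧
  (∀ e1 ∈ Q1.edges, ∃ e2 ∈ Q2.edges, (e1.1, e2.1) ∈ S ∧ (e1.2, e2.2) ∈ S)

/-- Remove the attribute constraints on the query focus `u`. -/
def QGP.removeFocusAttr {V : Type} [DecidableEq V] (Q : QGP V) (u : V) : QGP V :=
  { Q with attrC := fun w => if w = u then (∅ : AttrConstraints) else Q.attrC w }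

/-- `Q1(u1) ≡ Q2(u2)` : equivalence of QGPs with query foci — mutual containment
(after dropping the attribute constraints on the foci) via maximum match
relations that relate the two foci. -/
def FocusEquiv {V1 V2 : Type} [DecidableEq V1] [DecidableEq V2]
    (Q1 : QGP V1) (u1 : V1) (Q2 : QGP V2) (u2 : V2) : Prop :=
  ∃ (S12 : Set (V1 × V2)) (S21 : Set (V2 × V1)),
    QGPContainRel (Q1.removeFocusAttr u1) (Q2.removeFocusAttr u2) S12 ∧
    (∀ S, QGPContainRel (Q1.removeFocusAttr u1) (Q2.removeFocusAttr u2) S → S ⊆ S12) ∧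
    QGPContainRel (Q2.removeFocusAttr u2) (Q1.removeFocusAttr u1) S21 ∧
    (∀ S, QGPContainRel (Q2.removeFocusAttr u2) (Q1.removeFocusAttr u1) S → S ⊆ S21) ∧
    (u1, u2) ∈ S12 ∧ (u2, u1) ∈ S21

/-- The refinement relation `R⁺` for positive predicates determined by `S`. -/
def Rplus {V1 V2 : Type} [DecidableEq V1] (C1 : CGP V1) (C2 : CGP V2)
    (S : Set (V1 × V2)) : Set ((V1 × V1) × (V2 × V2)) :=
  {p | p.1 ∈ C1.posEdges ∧ p.2 ∈ C2.coreEdges ∧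
       (p.1.1, p.2.1) ∈ S ∧ (p.1.2, p.2.2) ∈ S}

/-- The elimination relation `E⁺` for positive predicates determined by `S`. -/
def Eplus {V1 V2 : Type} [DecidableEq V1] [DecidableEq V2]
    (C1 : CGP V1) (C2 : CGP V2) (S : Set (V1 × V2)) :
    Set (PredShape V1 × V2) :=
  {p | IsPartOfPos C1 p.1 ∧ (p.1.focus, p.2) ∈ S ∧ p.2 ∈ C2.coreNodes ∧
       (∃ r2 : PredShape V2, IsPartOfPos C2 r2 ∧ r2.focus = p.2 ∧
          FocusEquiv (C1.predQGP p.1) p.1.focus (C2.predQGP r2) r2.focus) ∧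
       (∀ e ∈ C1.posEdges, e ∉ p.1.edges →
          (e.1 ∈ p.1.nodes → e.1 = p.1.focus) ∧
          (e.2 ∈ p.1.nodes → e.2 = p.1.focus))}

/-- `u1 ∼ u2` for pattern nodes of two CGPs: equal labels and entailed
attribute constraints. -/
def NodeSimC {V1 V2 : Type} (C1 : CGP V1) (C2 : CGP V2) (u1 : V1) (u2 : V2) : Prop :=
  C1.nlabel u1 = C2.nlabel u2 ∧ constrEntails (C1.attrC u1) (C2.attrC u2)

/-- `e ∼ e'` for pattern edges of two CGPs: matching endpoints, equal edge
labels, and counting quantifier of `e` at least that of `e'`. -/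
def EdgeSimC {V1 V2 : Type} (C1 : CGP V1) (C2 : CGP V2)
    (e : V1 × V1) (e' : V2 × V2) : Prop :=
  NodeSimC C1 C2 e.1 e'.1 ∧ NodeSimC C1 C2 e.2 e'.2 ∧
  C1.elabel e = C2.elabel e' ∧ C2.cq e' ≤ C1.cq e

/-- Two directed edges intersect in some node (for undirected paths). -/
def EdgesTouch {V : Type} (e f : V × V) : Prop :=
  e.1 = f.1 ∨ e.1 = f.2 ∨ e.2 = f.1 ∨ e.2 = f.2

/-- An undirected path among the edges `E`, starting at the node `u`. -/
def IsUPath {V : Type} (E : Set (V × V)) (u : V) (l : List (V × V)) : Prop :=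
  (∀ e ∈ l, e ∈ E) ∧ List.Chain' EdgesTouch l ∧
  (∀ e, l.head? = some e → (e.1 = u ∨ e.2 = u))

/-- The refinement relation `R⁻` for negative predicates determined by `S`:
`(e, e')` with `e` an edge of a negative predicate of `C1`, `e'` a core edge of
`C2`, `e ∼ e'`, and undirected paths from a pair `(u,w) ∈ S` leading to `e`
resp. `e'` whose corresponding edges are already in `R⁻`. -/
inductive InRminus {V1 V2 : Type} (C1 : CGP V1) (C2 : CGP V2)
    (S : Set (V1 × V2)) : (V1 × V1) → (V2 × V2) → Prop where
  | intro (e : V1 × V1) (e' : V2 × V2) (q : PredShape V1)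
      (hq : q ∈ C1.neg) (he : e ∈ q.edges) (he' : e' ∈ C2.coreEdges)
      (hsim : EdgeSimC C1 C2 e e')
      (u : V1) (w : V2) (huw : (u, w) ∈ S)
      (l1 : List (V1 × V1)) (l2 : List (V2 × V2)) (hlen : l1.length = l2.length)
      (hp1 : IsUPath (fun x => x ∈ q.edges) u (l1 ++ [e]))
      (hp2 : IsUPath (fun x => x ∈ C2.coreEdges) w (l2 ++ [e']))
      (hrec : ∀ i : Fin l1.length,
        InRminus C1 C2 S (l1.get i) (l2.get (Fin.cast hlen i))) :
      InRminus C1 C2 S e e'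

/-- The elimination relation `E⁻` for negative predicates determined by `S`. -/
def Eminus {V1 V2 : Type} [DecidableEq V1] [DecidableEq V2]
    (C1 : CGP V1) (C2 : CGP V2) (S : Set (V1 × V2)) :
    Set (PredShape V1 × V2) :=
  {p | p.1 ∈ C1.neg ∧ (p.1.focus, p.2) ∈ S ∧
       ∃ q2 ∈ C2.neg, q2.focus = p.2 ∧
         FocusEquiv (C1.predQGP p.1) p.1.focus (C2.predQGP q2) q2.focus}

theorem attrMatch_of_constrEntails {a : ℕ → Option ℤ} {P1 P2 : AttrConstraints}
    (h : constrEntails P1 P2) (hm : attrMatch a P1) : attrMatch a P2 := by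
  rintro ⟨n, op, c⟩ hc
  have hex : ∃ c1 ∈ P1, c1.1 = n := by
    by_contra hne
    push Not at hne
    have key : ∀ x : ℤ, op.holds x c := fun x =>
      h _ hc x (fun c1 h1 h2 => absurd h2 (hne c1 h1))
    have h1 := key (c - 1)
    have h2 := key (c + 1)
    have h3 := key c
    cases op <;> simp only [AOp.holds] at h1 h2 h3 <;> omega
  obtain ⟨c1, h1, rfl⟩ := hex
  obtain ⟨x, hx, -⟩ := hm c1 h1
  refine ⟨x, hx, h _ hc x ?_⟩
  intro d hd hdn
  obtain ⟨y, hy, hy2⟩ := hm d hd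
  have hdn' : d.1 = c1.1 := hdn
  rw [hdn', hx] at hy
  cases hy
  exact hy2

theorem comp_isSimRel {V1 V2 D : Type} {Q1 : QGP V1} {Q2 : QGP V2}
    {S : Set (V1 × V2)} (hS : IsPOMRel Q1 Q2 S) {G : DataGraph D}
    {R : Set (V1 × D)} (hR : IsSimRel Q1 G R) :
    IsSimRel Q2 G {p | ∃ u1, (u1, p.1) ∈ S ∧ (u1, p.2) ∈ R} := by
  obtain ⟨s1, s2, s3, s4⟩ := hS
  obtain ⟨r1, r2, r3, r4⟩ := hR
  refine ⟨?_, ?_, ?_, ?_⟩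
  · rintro ⟨w, v⟩ ⟨u, hs, hr⟩
    exact ⟨(s1 _ hs).2, (r1 _ hr).2⟩
  · rintro ⟨w, v⟩ ⟨u, hs, hr⟩
    exact ⟨(s2 _ hs).1.symm.trans (r2 _ hr).1,
      attrMatch_of_constrEntails (s2 _ hs).2 (r2 _ hr).2⟩
  · rintro ⟨w, v⟩ ⟨u, hs, hr⟩ w' he
    obtain ⟨u', he1, hs', hl, hq⟩ := s4 _ hs w' he
    obtain ⟨T, hT, hT2⟩ := r3 _ hr u' he1
    refine ⟨T, hq.trans hT, fun v' hv' => ?_⟩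
    obtain ⟨a, b, c⟩ := hT2 v' hv'
    exact ⟨a, b.trans hl, u', hs', c⟩
  · rintro ⟨w, v⟩ ⟨u, hs, hr⟩ w' he
    obtain ⟨u', he1, hs', hl⟩ := s3 _ hs w' he
    obtain ⟨v', a, b, c⟩ := r4 _ hr u' he1
    exact ⟨v', a, b.trans hl, u', hs', c⟩

/-- If `S` is a POM match relation witnessing `Q1 ▷ Q2`, then for
every data graph `G` with `Q1 ≺_c G` and every pair `(u1,u2) ∈ S`,
`M^G_{Q1}(u1) ⊆ M^G_{Q2}(u2)`. -/
theorem pom_node_match_subset {V1 V2 D : Type} (Q1 : QGP V1) (Q2 : QGP V2)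
    (hQ1 : Q1.WellFormed) (hQ2 : Q2.WellFormed)
    (S : Set (V1 × V2)) (hS : IsPOMRel Q1 Q2 S)
    (hcov : ∀ u2 ∈ Q2.nodes, ∃ u1, (u1, u2) ∈ S)
    (G : DataGraph D) (hG : G.WellFormed) (hM : Q1.Matches G)
    (u1 : V1) (u2 : V2) (hu : (u1, u2) ∈ S) :
    Q1.MN G u1 ⊆ Q2.MN G u2 := by
  rintro v ⟨-, R, hR, hv⟩
  refine ⟨?_, _, comp_isSimRel hS hR, u1, hu, hv⟩
  obtain ⟨R', hR', hc⟩ := hM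
  refine ⟨_, comp_isSimRel hS hR', fun w hw => ?_⟩
  obtain ⟨u, hs⟩ := hcov w hw
  obtain ⟨x, hx⟩ := hc u (hS.1 _ hs).1
  exact ⟨x, u, hs, hx⟩
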